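/- arXiv:math/0104192 — 5 statements merged into one kernel-verified Lean document; each statement's English description precedes it below -/
import Mathlib

section
/- Let Λ be a lattice in ℝ² with minimal length R, and let x ∈ Λ be a vector with ‖x‖ = R. Then every element λ ∈ Λ that does not lie on the line ℝ·x satisfies dist(λ, ℝ·x) ≥ (√3/2)·R. -/
/-- If `x` realizes the minimal length `R` of a lattice `Λ` in `ℝ²`,
then every lattice point off the line `ℝ·x` is at distance at least `(√3/2)·R`
from that line. -/
theorem lattice_point_far_from_shortest_line
    (Λ : Submodule ℤ (EuclideanSpace ℝ (Fin 2))) [DiscreteTopology Λ] [IsZLattice ℝ Λ]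
    (R : ℝ) (hR : IsLeast {r : ℝ | ∃ v ∈ Λ, v ≠ 0 ∧ ‖v‖ = r} R)
    (x : EuclideanSpace ℝ (Fin 2)) (hxΛ : x ∈ Λ) (hx : ‖x‖ = R)
    (l : EuclideanSpace ℝ (Fin 2)) (hlΛ : l ∈ Λ)
    (hl : l ∉ Submodule.span ℝ ({x} : Set (EuclideanSpace ℝ (Fin 2)))) :
    Real.sqrt 3 / 2 * R ≤
      Metric.infDist l (Submodule.span ℝ ({x} : Set (EuclideanSpace ℝ (Fin 2))) : Set (EuclideanSpace ℝ (Fin 2))) := by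
  obtain ⟨⟨v, hv, hv0, hvR⟩, hmin⟩ := hR
  have hRpos : 0 < R := hvR ▸ norm_pos_iff.mpr hv0
  have hexp : ∀ t : ℝ, ‖l - t • x‖ ^ 2 = ‖l‖ ^ 2 - 2 * t * inner ℝ l x + t ^ 2 * R ^ 2 := by
    intro t
    rw [norm_sub_sq_real, inner_smul_right, norm_smul, hx, mul_pow, Real.norm_eq_abs, sq_abs]
    ring
  obtain ⟨a, ha⟩ : ∃ a : ℝ, inner ℝ l x = a * R ^ 2 :=
    ⟨inner ℝ l x / R ^ 2, by field_simp⟩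
  have hm : R ≤ ‖l - (round a : ℝ) • x‖ := by
    apply hmin
    refine ⟨l - (round a : ℝ) • x, ?_, ?_, rfl⟩
    · rw [Int.cast_smul_eq_zsmul]
      exact Λ.sub_mem hlΛ (Λ.smul_mem _ hxΛ)
    · intro h
      apply hl
      rw [sub_eq_zero.mp h]
      exact Submodule.smul_mem _ _ (Submodule.mem_span_singleton_self x)
  have hm2 : R ^ 2 ≤ ‖l - (round a : ℝ) • x‖ ^ 2 := by gcongr
  rw [hexp, ha] at hm2
  have hr : (a - round a) ^ 2 ≤ 1 / 4 := by
    have h := abs_le.mp (abs_sub_round a)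
    nlinarith [h.1, h.2]
  have hr2 : (a - round a) ^ 2 * R ^ 2 ≤ 1 / 4 * R ^ 2 := by gcongr
  refine (Metric.le_infDist ⟨0, Submodule.zero_mem _⟩).mpr ?_
  intro y hy
  obtain ⟨t, rfl⟩ := Submodule.mem_span_singleton.mp hy
  rw [dist_eq_norm]
  refine (abs_le_of_sq_le_sq' ?_ (norm_nonneg _)).2
  rw [hexp, ha, mul_pow, div_pow, Real.sq_sqrt (by norm_num)]
  nlinarith [mul_nonneg (sq_nonneg (t - a)) (sq_nonneg R)]
end

section
/- Let T : ℝ² → ℝ² be an invertible linear map, and let a, b, m ∈ ℤ² with det(a, b) ≠ 0, where det(u, v) := u₁v₂ − u₂v₁. Then (1/2)·‖T m‖/(‖T a‖ + ‖T b‖) ≤ max(|det(m, a)|, |det(m, b)|). -/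
/-- The point of `ℝ²` (with the Euclidean norm) corresponding to an integer vector. -/
noncomputable def intVec (v : Fin 2 → ℤ) : EuclideanSpace ℝ (Fin 2) :=
  (WithLp.equiv 2 (Fin 2 → ℝ)).symm (fun i => (v i : ℝ))

/-- The "determinant" pairing `det(u,v) = u₁v₂ − u₂v₁` on `ℤ²` (algebraic intersection
number of the corresponding geodesics on the torus). -/
def intDet (u v : Fin 2 → ℤ) : ℤ := u 0 * v 1 - u 1 * v 0

/-- For an invertible linear map `T : ℝ² → ℝ²` and integer vectors
`a, b, m` with `det(a,b) ≠ 0`,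
`(1/2)·‖T m‖/(‖T a‖ + ‖T b‖) ≤ max(|det(m,a)|, |det(m,b)|)`. -/
theorem geodesic_intersection_bound
    (T : EuclideanSpace ℝ (Fin 2) →ₗ[ℝ] EuclideanSpace ℝ (Fin 2))
    (hT : Function.Bijective T)
    (a b m : Fin 2 → ℤ) (hab : intDet a b ≠ 0) :
    (1 / 2) * ‖T (intVec m)‖ / (‖T (intVec a)‖ + ‖T (intVec b)‖) ≤
      max (|intDet m a| : ℝ) (|intDet m b| : ℝ) := by
  have key : (intDet a b : ℝ) • intVec m =
      (intDet m b : ℝ) • intVec a - (intDet m a : ℝ) • intVec b := by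
    ext i
    fin_cases i <;> simp [intVec, intDet] <;> ring
  have hT2 := congrArg (fun x => ‖T x‖) key
  simp only [map_sub, map_smul, norm_smul, Real.norm_eq_abs] at hT2
  have h1 : (1 : ℝ) ≤ |(intDet a b : ℝ)| := by
    exact_mod_cast Int.one_le_abs hab
  have h2 := norm_sub_le ((intDet m b : ℝ) • T (intVec a)) ((intDet m a : ℝ) • T (intVec b))
  simp only [norm_smul, Real.norm_eq_abs] at h2
  have hA := norm_nonneg (T (intVec a))
  have hB := norm_nonneg (T (intVec b))
  have hM := norm_nonneg (T (intVec m))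
  have h3 := mul_le_mul_of_nonneg_right
    (le_max_right |(intDet m a : ℝ)| |(intDet m b : ℝ)|) hA
  have h4 := mul_le_mul_of_nonneg_right
    (le_max_left |(intDet m a : ℝ)| |(intDet m b : ℝ)|) hB
  have h5 := mul_le_mul_of_nonneg_right h1 hM
  apply div_le_of_le_mul₀ (by positivity) (by positivity)
  rw [mul_add]
  linarith
end

section
/- Let G be a finite simple graph with vertex set V and edge set E, equipped with positive edge weights w : E → ℝ_{>0}, and let N, ε > 0. Suppose (i) the total weight Σ_{e∈E} w(e) is less than N, and (ii) every cycle in G has total weight at least ε. Then the first Betti number of G, namely |E| − |V| + c where c is the number of connected components of G, is at most 32N²/ε². -/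
theorem bb_clusters {V : Type*} [DecidableEq V] (par : V → V) (rk : V → ℕ)
    (hrk : ∀ v, par v ≠ v → rk v = rk (par v) + 1) (hrk0 : ∀ v, par v = v → rk v = 0)
    (D l : V → ℝ) (hD : ∀ v, par v ≠ v → D v = D (par v) + l v)
    (s δ : ℝ) (hs : 0 < s) (hδ : 0 < δ) (hl : ∀ v, par v ≠ v → l v < s) :
    ∀ (n : ℕ) (A : Finset V), A.card = n → (∀ v ∈ A, par v ∈ A) → ∃ p : V → V,
      (∀ v ∈ A, p v ∈ A) ∧
      (∀ v ∈ A, p v = v ∨ (par v ≠ v ∧ p (par v) = p v)) ∧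
      (∀ v ∈ A, D v - D (p v) ≤ δ + s) ∧
      (∀ v ∈ A, par (p v) = p v ∨ ∃ u ∈ A, p u = p v ∧ δ ≤ D u - D (p v)) := by
  classical
  intro n
  induction n using Nat.strong_induction_on with
  | _ n ih =>
  intro A hA hcl
  have hit : ∀ k, ∀ v ∈ A, par^[k] v ∈ A := by
    intro k
    induction k with
    | zero => intro v hv; simpa using hv
    | succ k ih => intro v hv; rw [Function.iterate_succ_apply]; exact ih _ (hcl v hv)
  by_cases hex : ∃ v ∈ A, ∃ u ∈ A, (∃ k, par^[k] u = v) ∧ δ ≤ D u - D v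
  · set S := A.filter (fun v => ∃ u ∈ A, (∃ k, par^[k] u = v) ∧ δ ≤ D u - D v) with hS
    have hSne : S.Nonempty := by
      obtain ⟨v, hv, h⟩ := hex
      exact ⟨v, by simp only [hS, Finset.mem_filter]; exact ⟨hv, h⟩⟩
    obtain ⟨v, hvS, hmax⟩ := S.exists_max_image rk hSne
    have hvS' := hvS
    simp only [hS, Finset.mem_filter] at hvS'
    obtain ⟨hvA, u, huA, hu, hud⟩ := hvS'
    set P := A.filter (fun x => ∃ k, par^[k] x = v) with hP
    have memP : ∀ x, x ∈ P ↔ x ∈ A ∧ ∃ k, par^[k] x = v := by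
      intro x; simp [hP]
    have hvP : v ∈ P := (memP v).2 ⟨hvA, 0, rfl⟩
    have hcard : (A \ P).card < n := by
      rw [← hA]
      apply Finset.card_lt_card
      refine ⟨Finset.sdiff_subset, fun h => ?_⟩
      exact (Finset.mem_sdiff.1 (h hvA)).2 hvP
    obtain ⟨p', h0, h1, h2, h3⟩ := ih _ hcard (A \ P) rfl (by
      intro x hx
      rw [Finset.mem_sdiff] at hx ⊢
      refine ⟨hcl x hx.1, fun h => hx.2 ?_⟩
      obtain ⟨_, k, hk⟩ := (memP _).1 h
      exact (memP _).2 ⟨hx.1, k + 1, by rw [Function.iterate_succ_apply]; exact hk⟩)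
    have step : ∀ k x, x ∈ A → par^[k] x = v → x ≠ v →
        ∃ y ∈ A, par y = v ∧ y ≠ v ∧ ∃ j, par^[j] x = y := by
      intro k
      induction k with
      | zero => intro x _ h h'; exact absurd h h'
      | succ k ihk =>
        intro x hx h h'
        rw [Function.iterate_succ_apply] at h
        by_cases hpx : par x = v
        · exact ⟨x, hx, hpx, h', 0, rfl⟩
        · obtain ⟨y, hy, e1, e2, j, hj⟩ := ihk (par x) (hcl x hx) h hpx
          exact ⟨y, hy, e1, e2, j + 1, by rw [Function.iterate_succ_apply]; exact hj⟩
    refine ⟨fun x => if x ∈ P then v else p' x, ?_, ?_, ?_, ?_⟩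
    · intro x hx
      by_cases hxP : x ∈ P
      · simpa [hxP] using hvA
      · simp only [hxP, if_false]
        exact (Finset.mem_sdiff.1 (h0 x (Finset.mem_sdiff.2 ⟨hx, hxP⟩))).1
    · intro x hx
      by_cases hxP : x ∈ P
      · simp only [hxP, if_true]
        by_cases hxv : x = v
        · left; exact hxv.symm
        · right
          obtain ⟨_, k, hk⟩ := (memP _).1 hxP
          have hne : par x ≠ x := by
            intro he
            apply hxv
            rw [← hk]
            exact (Function.iterate_fixed he k).symm
          refine ⟨hne, ?_⟩
          have : par x ∈ P := by
            refine (memP _).2 ⟨hcl x hx, ?_⟩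
            cases k with
            | zero => exact absurd hk hxv
            | succ k => exact ⟨k, by rw [Function.iterate_succ_apply] at hk; exact hk⟩
          simp [this]
      · have hx' := Finset.mem_sdiff.2 ⟨hx, hxP⟩
        have : par x ∉ P := by
          intro h
          obtain ⟨_, k, hk⟩ := (memP _).1 h
          exact hxP ((memP _).2 ⟨hx, k + 1, by rw [Function.iterate_succ_apply]; exact hk⟩)
        simp only [hxP, this, if_false]
        exact h1 x hx'
    · intro x hx
      by_cases hxP : x ∈ P
      · simp only [hxP, if_true]
        by_cases hxv : x = v
        · subst hxv; simp; positivity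
        · obtain ⟨_, k, hk⟩ := (memP _).1 hxP
          obtain ⟨y, hyA, hy1, hy2, j, hj⟩ := step k x hx hk hxv
          have hyne : par y ≠ y := by rw [hy1]; exact hy2.symm
          have hyS : y ∉ S := by
            intro h
            have := hmax y h
            have := hrk y hyne
            rw [hy1] at this
            omega
          have hlt : D x - D y < δ := by
            by_contra hc
            apply hyS
            simp only [hS, Finset.mem_filter]
            exact ⟨hyA, x, hx, ⟨j, hj⟩, not_lt.1 hc⟩
          have e1 := hD y hyne
          rw [hy1] at e1
          have := hl y hyne
          linarith
      · simp only [hxP, if_false]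
        exact h2 x (Finset.mem_sdiff.2 ⟨hx, hxP⟩)
    · intro x hx
      by_cases hxP : x ∈ P
      · right
        refine ⟨u, huA, ?_, ?_⟩
        · simp [hxP, (memP u).2 ⟨huA, hu⟩]
        · simpa [hxP] using hud
      · simp only [hxP, if_false]
        rcases h3 x (Finset.mem_sdiff.2 ⟨hx, hxP⟩) with h | ⟨z, hz, hz1, hz2⟩
        · left; exact h
        · right
          rw [Finset.mem_sdiff] at hz
          exact ⟨z, hz.1, by simpa [hz.2] using hz1, hz2⟩
  · push Not at hex
    have hroot : ∀ m v, rk v = m → par (par^[m] v) = par^[m] v := by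
      intro m
      induction m with
      | zero =>
        intro v hv
        by_contra h
        have := hrk v h
        omega
      | succ m ihm =>
        intro v hv
        rw [Function.iterate_succ_apply]
        apply ihm
        have : par v ≠ v := fun h => by have := hrk0 v h; omega
        have := hrk v this
        omega
    refine ⟨fun v => par^[rk v] v, fun v hv => hit _ v hv, ?_, ?_, ?_⟩
    · intro v hv
      by_cases h : par v = v
      · left; simp [hrk0 v h]
      · right
        refine ⟨h, ?_⟩
        simp only
        rw [hrk v h, Function.iterate_succ_apply]
    · intro v hv
      have := hex _ (hit (rk v) v hv) v hv ⟨_, rfl⟩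
      simp only
      linarith
    · intro v hv
      left
      exact hroot _ v rfl

theorem bb_forest {V : Type*} [Fintype V] (G : SimpleGraph V) :
    ∃ (par root : V → V) (rk : V → ℕ),
      (∀ v, par v ≠ v → rk v = rk (par v) + 1) ∧ (∀ v, par v = v → rk v = 0) ∧
      (∀ v, par v ≠ v → G.Adj v (par v)) ∧ (∀ a b, G.Adj a b → root a = root b) ∧
      (∀ v, par v = v ↔ v = root v) ∧
      Nat.card {v // par v = v} = Nat.card G.ConnectedComponent := by
  classical
  let root : V → V := fun v => (G.connectedComponentMk v).out
  have hr : ∀ v, G.connectedComponentMk (root v) = G.connectedComponentMk v := by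
    intro v; exact (G.connectedComponentMk v).out_eq
  have hreach : ∀ v, G.Reachable v (root v) := fun v =>
    SimpleGraph.ConnectedComponent.exact (hr v).symm
  have hradj : ∀ a b, G.Adj a b → root a = root b := by
    intro a b h
    simp only [root]
    rw [SimpleGraph.ConnectedComponent.sound h.reachable]
  have hch : ∀ v, ∃ u, (v = root v → u = v) ∧
      (v ≠ root v → G.Adj v u ∧ G.dist v (root v) = G.dist u (root u) + 1) := by
    intro v
    by_cases h : v = root v
    · exact ⟨v, fun _ => rfl, fun h' => absurd h h'⟩
    · obtain ⟨W, hW⟩ := (hreach v).exists_walk_length_eq_dist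
      have key : ∀ r (W : G.Walk v r), v ≠ r → ∃ u, G.Adj v u ∧ ∃ q : G.Walk u r,
          W.length = q.length + 1 := by
        intro r W hne
        cases W with
        | nil => exact absurd rfl hne
        | cons hadj q => exact ⟨_, hadj, q, by simp⟩
      obtain ⟨u, hadj, q, hWW⟩ := key _ W h
      refine ⟨u, fun h' => absurd h' h, fun _ => ⟨hadj, ?_⟩⟩
      rw [← hradj v u hadj]
      have h1 : G.dist u (root v) ≤ q.length := SimpleGraph.dist_le q
      obtain ⟨q', hq'⟩ := q.reachable.exists_walk_length_eq_dist
      have h2 : G.dist v (root v) ≤ (SimpleGraph.Walk.cons hadj q').length :=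
        SimpleGraph.dist_le _
      simp only [SimpleGraph.Walk.length_cons] at h2
      omega
  choose par hp1 hp2 using hch
  have hiff : ∀ v, par v = v ↔ v = root v := by
    intro v
    refine ⟨fun h => ?_, hp1 v⟩
    by_contra hc
    have := (hp2 v hc).1
    rw [h] at this
    exact G.irrefl this
  refine ⟨par, root, fun v => G.dist v (root v), ?_, ?_, ?_, hradj, hiff, ?_⟩
  · intro v hv
    exact (hp2 v (fun h => hv ((hiff v).2 h))).2
  · intro v hv
    have := (hiff v).1 hv
    simp only
    rw [← this]
    simp
  · intro v hv
    exact (hp2 v (fun h => hv ((hiff v).2 h))).1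
  · apply Nat.card_congr
    refine Equiv.ofBijective (fun v => G.connectedComponentMk v.1) ⟨?_, ?_⟩
    · rintro ⟨a, ha⟩ ⟨b, hb⟩ h
      simp only at h
      rw [Subtype.mk.injEq, (hiff a).1 ha, (hiff b).1 hb]
      simp only [root]
      rw [h]
    · intro c
      have hc : G.connectedComponentMk c.out = c := c.out_eq
      refine ⟨⟨c.out, (hiff _).2 ?_⟩, hc⟩
      simp only [root]
      rw [hc]

theorem bb_cycle {V : Type*} [DecidableEq V] (G : SimpleGraph V) (w : Sym2 V → ℝ) (ε : ℝ)
    (hw : ∀ e ∈ G.edgeSet, 0 < w e)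
    (hcycle : ∀ (v : V) (c : G.Walk v v), c.IsCycle → ε ≤ (c.edges.map w).sum)
    (a b : V) (hab : G.Adj a b) (W : G.Walk b a) (hW : s(a, b) ∉ W.edges) :
    ε ≤ w s(a, b) + (W.edges.map w).sum := by
  have hc : (SimpleGraph.Walk.cons hab W.bypass).IsCycle := by
    rw [SimpleGraph.Walk.cons_isCycle_iff]
    exact ⟨W.bypass_isPath, fun h => hW (W.edges_bypass_subset_edges h)⟩
  have h1 := hcycle _ _ hc
  simp only [SimpleGraph.Walk.edges_cons, List.map_cons, List.sum_cons] at h1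
  have hsub : (W.bypass.edges.map w).sum ≤ (W.edges.map w).sum := by
    have hnd : W.bypass.edges.Nodup := W.bypass_isPath.isTrail.edges_nodup
    obtain ⟨L, hL1, hL2⟩ := hnd.subperm W.edges_bypass_subset_edges
    rw [← (hL1.map w).sum_eq]
    apply List.Sublist.sum_le_sum (hL2.map w)
    intro x hx
    obtain ⟨e, he, rfl⟩ := List.mem_map.1 hx
    exact (hw e (W.edges_subset_edgeSet he)).le
  linarith

theorem bb_core {V : Type*} [Fintype V] [DecidableEq V] (G : SimpleGraph V) [DecidableRel G.Adj]
    (w : Sym2 V → ℝ) (ε s δ : ℝ) (hs : 0 < s) (hδ : 0 < δ) (hε : 4 * δ + 6 * s ≤ ε)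
    (hw : ∀ e ∈ G.edgeSet, 0 < w e) (hws : ∀ e ∈ G.edgeSet, w e < s)
    (hcycle : ∀ (v : V) (c : G.Walk v v), c.IsCycle → ε ≤ (c.edges.map w).sum) :
    ((G.edgeFinset.card : ℝ) - (Fintype.card V : ℝ) + (Nat.card G.ConnectedComponent : ℝ)) ≤
      ((∑ e ∈ G.edgeFinset, w e) / δ) ^ 2 := by
  obtain ⟨par, root, rk, hrk, hrk0, hadj, hroot, hiff, hcard⟩ := bb_forest G
  set l : V → ℝ := fun v => w s(v, par v) with hl
  set D : V → ℝ := fun v => ∑ i ∈ Finset.range (rk v), l (par^[i] v) with hDdef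
  have hD : ∀ v, par v ≠ v → D v = D (par v) + l v := by
    intro v hv
    simp only [hDdef]
    rw [hrk v hv, Finset.sum_range_succ']
    simp only [Function.iterate_succ_apply, Function.iterate_zero, id]
  have hl0 : ∀ v, par v ≠ v → 0 < l v := fun v hv => hw _ (hadj v hv)
  have hls : ∀ v, par v ≠ v → l v < s := fun v hv => hws _ (hadj v hv)
  obtain ⟨p, -, h1, h2, h3⟩ := bb_clusters par rk hrk hrk0 D l hD s δ hs hδ hls _ Finset.univ rfl
    (by simp)
  simp only [Finset.mem_univ, true_and, forall_true_left] at h1 h2 h3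
  -- idempotence and roots
  have hpp : ∀ m v, rk v = m → p (p v) = p v ∧ root (p v) = root v := by
    intro m
    induction m with
    | zero =>
      intro v hv
      rcases h1 v with h | ⟨h, _⟩
      · rw [h, h]; exact ⟨rfl, rfl⟩
      · have := hrk v h; omega
    | succ m ih =>
      intro v hv
      rcases h1 v with h | ⟨h, h'⟩
      · rw [h, h]; exact ⟨rfl, rfl⟩
      · have := ih (par v) (by have := hrk v h; omega)
        rw [← h', hroot v _ (hadj v h)]; exact this
  -- upward walks
  have hup : ∀ m v, rk v = m → ∃ W : G.Walk v (p v),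
      (∀ e ∈ W.edges, ∃ u, par u ≠ u ∧ e = s(u, par u)) ∧ (W.edges.map w).sum = D v - D (p v) := by
    intro m
    induction m with
    | zero =>
      intro v hv
      rcases h1 v with h | ⟨h, _⟩
      · rw [h]; exact ⟨SimpleGraph.Walk.nil, by simp, by simp⟩
      · have := hrk v h; omega
    | succ m ih =>
      intro v hv
      rcases h1 v with h | ⟨h, h'⟩
      · rw [h]; exact ⟨SimpleGraph.Walk.nil, by simp, by simp⟩
      · obtain ⟨W, hW1, hW2⟩ := ih (par v) (by have := hrk v h; omega)
        rw [← h']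
        refine ⟨SimpleGraph.Walk.cons (hadj v h) W, ?_, ?_⟩
        · intro e he
          simp only [SimpleGraph.Walk.edges_cons, List.mem_cons] at he
          rcases he with rfl | he
          · exact ⟨v, h, rfl⟩
          · exact hW1 e he
        · simp only [SimpleGraph.Walk.edges_cons, List.map_cons, List.sum_cons, hW2, hD v h, hl]
          ring
  -- weight of a piece
  have hwt : ∀ m u, rk u = m → D u - D (p u) ≤
      ∑ x ∈ Finset.univ.filter (fun x => p x = p u ∧ par x ≠ x ∧ p x ≠ x ∧ rk x ≤ rk u), l x := by
    have hnn : ∀ u, 0 ≤ ∑ x ∈ Finset.univ.filter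
        (fun x => p x = p u ∧ par x ≠ x ∧ p x ≠ x ∧ rk x ≤ rk u), l x := by
      intro u
      apply Finset.sum_nonneg
      intro x hx
      simp only [Finset.mem_filter, Finset.mem_univ, true_and] at hx
      exact (hl0 x hx.2.1).le
    intro m
    induction m with
    | zero =>
      intro v hv
      rcases h1 v with h | ⟨h, _⟩
      · have := hnn v; rw [h] at this ⊢; simpa using this
      · have := hrk v h; omega
    | succ m ih =>
      intro v hv
      by_cases hpv : p v = v
      · have := hnn v; rw [hpv] at this ⊢; simpa using this
      · obtain ⟨h, h'⟩ := (h1 v).resolve_left hpv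
        have e0 := hrk v h
        have e1 := ih (par v) (by omega)
        rw [h'] at e1
        have e2 := hD v h
        have e3 : l v + ∑ x ∈ Finset.univ.filter
            (fun x => p x = p v ∧ par x ≠ x ∧ p x ≠ x ∧ rk x ≤ rk (par v)), l x ≤
            ∑ x ∈ Finset.univ.filter
            (fun x => p x = p v ∧ par x ≠ x ∧ p x ≠ x ∧ rk x ≤ rk v), l x := by
          rw [← Finset.sum_insert (by simp; intros; omega)]
          apply Finset.sum_le_sum_of_subset_of_nonneg
          · intro x hx
            simp only [Finset.mem_insert, Finset.mem_filter, Finset.mem_univ, true_and] at hx ⊢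
            rcases hx with rfl | ⟨a, b, c, d⟩
            · exact ⟨rfl, h, hpv, le_rfl⟩
            · exact ⟨a, b, c, by omega⟩
          · intro x hx _
            simp only [Finset.mem_filter, Finset.mem_univ, true_and] at hx
            exact (hl0 x hx.2.1).le
        linarith
  -- tree edges
  set NR : Finset V := Finset.univ.filter (fun v => par v ≠ v) with hNR
  set T : Finset (Sym2 V) := NR.image (fun v => s(v, par v)) with hT
  have hinj : Set.InjOn (fun v => s(v, par v)) (NR : Set V) := by
    intro a ha b hb hab
    simp only [hNR, Finset.coe_filter, Finset.mem_univ, true_and, Set.mem_ofPred_eq] at ha hb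
    simp only [Sym2.eq_iff] at hab
    rcases hab with h | ⟨h, h'⟩
    · exact h.1
    · have e1 := hrk a ha
      have e2 := hrk b hb
      rw [h'] at e1
      rw [← h] at e2
      omega
  have hTsub : T ⊆ G.edgeFinset := by
    intro e he
    simp only [hT, hNR, Finset.mem_image, Finset.mem_filter, Finset.mem_univ, true_and] at he
    obtain ⟨v, hv, rfl⟩ := he
    rw [SimpleGraph.mem_edgeFinset]
    exact hadj v hv
  have hTcard : T.card = NR.card := Finset.card_image_of_injOn hinj
  have hV : Fintype.card V = Nat.card G.ConnectedComponent + NR.card := by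
    rw [← hcard, Nat.card_eq_fintype_card, Fintype.card_subtype, hNR]
    exact (Finset.card_filter_add_card_filter_not (s := Finset.univ) (fun v => par v = v)).symm
  have hsumT : ∑ v ∈ NR, l v ≤ ∑ e ∈ G.edgeFinset, w e := by
    have : ∑ v ∈ NR, l v = ∑ e ∈ T, w e := (Finset.sum_image hinj).symm
    rw [this]
    apply Finset.sum_le_sum_of_subset_of_nonneg hTsub
    intro e he _
    exact (hw e (SimpleGraph.mem_edgeFinset.1 he)).le
  -- heavy pieces
  set K : Finset V := Finset.univ.filter (fun t => p t = t ∧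
    ∃ u, p u = t ∧ δ ≤ D u - D t) with hK
  have hKcard : (K.card : ℝ) * δ ≤ ∑ e ∈ G.edgeFinset, w e := by
    refine le_trans ?_ hsumT
    have e1 : ∑ t ∈ K, ∑ v ∈ NR.filter (fun v => p v = t), l v ≤ ∑ v ∈ NR, l v := by
      rw [← Finset.sum_biUnion]
      · apply Finset.sum_le_sum_of_subset_of_nonneg
        · intro x hx
          simp only [Finset.mem_biUnion, Finset.mem_filter] at hx
          obtain ⟨_, _, h, _⟩ := hx
          exact h
        · intro x hx _
          simp only [hNR, Finset.mem_filter, Finset.mem_univ, true_and] at hx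
          exact (hl0 x hx).le
      · intro a _ b _ hab
        rw [Function.onFun, Finset.disjoint_left]
        intro x hx hx'
        rw [Finset.mem_filter] at hx hx'
        exact hab (hx.2.symm.trans hx'.2)
    refine le_trans ?_ e1
    rw [← nsmul_eq_mul]
    apply Finset.card_nsmul_le_sum
    intro t ht
    simp only [hK, Finset.mem_filter, Finset.mem_univ, true_and] at ht
    obtain ⟨_, u, hu, hud⟩ := ht
    have := hwt _ u rfl
    rw [hu] at this
    refine (hud.trans this).trans ?_
    apply Finset.sum_le_sum_of_subset_of_nonneg
    · intro x hx
      simp only [hNR, Finset.mem_filter, Finset.mem_univ, true_and] at hx ⊢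
      exact ⟨hx.2.1, hx.1⟩
    · intro x hx _
      simp only [hNR, Finset.mem_filter, Finset.mem_univ, true_and] at hx
      exact (hl0 x hx.1).le
  -- walks up avoid nontree edges
  have hnt : ∀ e, e ∉ T → ∀ v, ∃ W : G.Walk v (p v), e ∉ W.edges ∧
      (W.edges.map w).sum ≤ δ + s := by
    intro e he v
    obtain ⟨W, hW1, hW2⟩ := hup _ v rfl
    refine ⟨W, fun h => he ?_, by rw [hW2]; exact h2 v⟩
    obtain ⟨u, hu, rfl⟩ := hW1 e h
    simp only [hT, hNR, Finset.mem_image, Finset.mem_filter, Finset.mem_univ, true_and]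
    exact ⟨u, hu, rfl⟩
  have hdiag : ∀ a b, G.Adj a b → s(a, b) ∉ T → p a ≠ p b := by
    intro a b hab hT' hpe
    obtain ⟨W1, hW1, hW1'⟩ := hnt _ hT' a
    obtain ⟨W2, hW2, hW2'⟩ := hnt _ hT' b
    have := bb_cycle G w ε hw hcycle a b hab (W2.append ((W1.copy rfl hpe).reverse)) (by
      simp [hW1, hW2])
    simp only [SimpleGraph.Walk.edges_append, SimpleGraph.Walk.edges_reverse,
      SimpleGraph.Walk.edges_copy, List.map_append, List.map_reverse, List.sum_append,
      List.sum_reverse] at this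
    have := hws s(a, b) hab
    linarith
  have hone : ∀ a b c d, G.Adj a b → G.Adj c d → s(a, b) ∉ T → p a = p c → p b = p d →
      s(a, b) = s(c, d) := by
    intro a b c d hab hcd hT' hac hbd
    by_contra hne
    obtain ⟨Wa, ha, ha'⟩ := hnt _ hT' a
    obtain ⟨Wb, hb, hb'⟩ := hnt _ hT' b
    obtain ⟨Wc, hc, hc'⟩ := hnt _ hT' c
    obtain ⟨Wd, hd, hd'⟩ := hnt _ hT' d
    have := bb_cycle G w ε hw hcycle a b hab
      (((Wb.copy rfl hbd).append Wd.reverse).append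
        (SimpleGraph.Walk.cons hcd.symm (Wc.append (Wa.copy rfl hac).reverse))) (by
      have hne' : s(a, b) ≠ s(d, c) := by rw [Sym2.eq_swap (a := d)]; exact hne
      simp only [SimpleGraph.Walk.edges_append, SimpleGraph.Walk.edges_reverse,
        SimpleGraph.Walk.edges_copy, SimpleGraph.Walk.edges_cons, List.mem_append, List.mem_cons,
        List.mem_reverse]
      tauto)
    simp only [SimpleGraph.Walk.edges_append, SimpleGraph.Walk.edges_reverse,
      SimpleGraph.Walk.edges_copy, SimpleGraph.Walk.edges_cons, List.map_append, List.map_cons,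
      List.sum_cons, List.map_reverse, List.sum_append, List.sum_reverse] at this
    have := hws s(a, b) hab
    have := hws s(d, c) hcd.symm
    linarith
  -- counting
  set I : Finset (Sym2 V) := K.offDiag.image Sym2.mk.uncurry ∪ K.image (fun t => s(t, root t)) with hI
  have hIcard : I.card ≤ K.card ^ 2 := by
    have e1 : I.card ≤ K.card.choose 2 + K.card := by
      refine (Finset.card_union_le _ _).trans ?_
      gcongr
      · exact (Sym2.card_image_offDiag K).le
      · exact Finset.card_image_le
    have e2 := Nat.choose_two_right K.card
    have e3 : K.card.choose 2 + K.card ≤ K.card ^ 2 := by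
      generalize K.card = k at *
      rw [e2]
      rcases k with _ | k
      · simp
      · have : (k + 1) * (k + 1 - 1) / 2 ≤ (k + 1) * k := Nat.div_le_self _ _
        nlinarith
    omega
  have hmap : (G.edgeFinset \ T).card ≤ I.card := by
    apply Finset.card_le_card_of_injOn (Sym2.map p)
    · intro e he
      induction e using Sym2.ind with
      | _ a b =>
      simp only [Finset.coe_sdiff, Set.mem_sdiff, Finset.mem_coe, SimpleGraph.mem_edgeFinset] at he
      obtain ⟨hab, hT'⟩ := he
      have hab : G.Adj a b := hab
      have hne := hdiag a b hab hT'
      have ht : ∀ v, p v ∈ K ∨ p v = root v := by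
        intro v
        obtain ⟨q1, q2⟩ := hpp _ v rfl
        rcases h3 v with h | ⟨u, hu⟩
        · right; rw [(hiff _).1 h, q2]
        · left
          simp only [hK, Finset.mem_filter, Finset.mem_univ, true_and]
          exact ⟨q1, u, hu⟩
      have hr := hroot a b hab
      have ra := (hpp _ a rfl).2
      have rb := (hpp _ b rfl).2
      simp only [Sym2.map_mk, hI, Finset.coe_union, Set.mem_union, Finset.mem_coe,
        Finset.mem_image, Finset.mem_offDiag]
      rcases ht a with h | h <;> rcases ht b with h' | h'
      · left; exact ⟨(p a, p b), ⟨h, h', hne⟩, rfl⟩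
      · right; exact ⟨p a, h, by rw [ra, hr, h']⟩
      · right; exact ⟨p b, h', by rw [rb, ← hr, h, Sym2.eq_swap]⟩
      · exact absurd (h.trans (hr.trans h'.symm)) hne
    · intro e he f hf hef
      induction e using Sym2.ind with
      | _ a b =>
      induction f using Sym2.ind with
      | _ c d =>
      simp only [Finset.coe_sdiff, Set.mem_sdiff, Finset.mem_coe, SimpleGraph.mem_edgeFinset] at he hf
      simp only [Sym2.map_mk, Sym2.eq_iff] at hef
      have hab : G.Adj a b := he.1
      have hcd : G.Adj c d := hf.1
      rcases hef with ⟨h, h'⟩ | ⟨h, h'⟩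
      · exact hone a b c d hab hcd he.2 h h'
      · rw [Sym2.eq_swap (a := c)]
        exact hone a b d c hab hcd.symm he.2 h h'
  rw [Finset.card_sdiff_of_subset hTsub, hTcard] at hmap
  have hle : G.edgeFinset.card ≤ K.card ^ 2 + NR.card := by omega
  have hle' : (G.edgeFinset.card : ℝ) ≤ (K.card : ℝ) ^ 2 + NR.card := by exact_mod_cast hle
  have hk : (K.card : ℝ) ≤ (∑ e ∈ G.edgeFinset, w e) / δ := by
    rw [le_div_iff₀ hδ]; exact hKcard
  have hk2 : (K.card : ℝ) ^ 2 ≤ ((∑ e ∈ G.edgeFinset, w e) / δ) ^ 2 := by gcongr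
  rw [hV]
  push_cast
  linarith

/-- A finite metric graph of total length less than `N` in which every
cycle has length at least `ε` has first Betti number `|E| − |V| + c` at most `32N²/ε²`. -/
theorem betti_bound_of_metric_graph
    {V : Type*} [Fintype V] (G : SimpleGraph V) [DecidableRel G.Adj]
    (w : Sym2 V → ℝ) (N ε : ℝ) (hN : 0 < N) (hε : 0 < ε)
    (hw : ∀ e ∈ G.edgeSet, 0 < w e)
    (htotal : ∑ e ∈ G.edgeFinset, w e < N)
    (hcycle : ∀ (v : V) (c : G.Walk v v), c.IsCycle → ε ≤ (c.edges.map w).sum) :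
    ((G.edgeFinset.card : ℝ) - (Fintype.card V : ℝ) + (Nat.card G.ConnectedComponent : ℝ)) ≤
      32 * N ^ 2 / ε ^ 2 := by
  classical
  have hw' : ∀ e ∈ G.edgeFinset, 0 ≤ w e := fun e he => (hw e (SimpleGraph.mem_edgeFinset.1 he)).le
  have hW0 : 0 ≤ ∑ e ∈ G.edgeFinset, w e := Finset.sum_nonneg hw'
  rw [le_div_iff₀ (by positivity)]
  by_cases hac : ∀ (v : V) (c : G.Walk v v), ¬ c.IsCycle
  · have h := bb_core G w (4 * (ε / 5) + 6 * N) N (ε / 5) hN (by positivity) le_rfl hw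
      (fun e he => lt_of_le_of_lt
        (Finset.single_le_sum hw' (SimpleGraph.mem_edgeFinset.2 he)) htotal)
      (fun v c hc => absurd hc (hac v c))
    rw [div_pow, le_div_iff₀ (by positivity)] at h
    nlinarith
  · push Not at hac
    obtain ⟨v, c, hc⟩ := hac
    have hεN : ε ≤ N := by
      refine (hcycle v c hc).trans (le_trans ?_ htotal.le)
      have hnd := hc.isTrail.edges_nodup
      rw [← List.sum_toFinset w hnd]
      apply Finset.sum_le_sum_of_subset_of_nonneg
      · intro e he
        rw [List.mem_toFinset] at he
        exact SimpleGraph.mem_edgeFinset.2 (c.edges_subset_edgeSet he)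
      · intro e he _
        exact hw' e he
    set L : Finset (Sym2 V) := G.edgeFinset.filter (fun e => ε / 32 ≤ w e) with hL
    set S : Finset (Sym2 V) := G.edgeFinset.filter (fun e => ¬ ε / 32 ≤ w e) with hS
    set H := G.deleteEdges {e | ε / 32 ≤ w e} with hH
    have hHG : H ≤ G := SimpleGraph.deleteEdges_le _
    have hHE : H.edgeFinset = S := by
      ext e
      simp [hH, hS, SimpleGraph.edgeSet_deleteEdges]
    have hmem : ∀ e ∈ H.edgeSet, e ∈ G.edgeSet ∧ w e < ε / 32 := by
      intro e he
      have : e ∈ S := by rw [← hHE]; exact SimpleGraph.mem_edgeFinset.2 he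
      simpa [hS] using this
    have h := bb_core H w ε (ε / 32) (ε / 5) (by positivity) (by positivity) (by linarith)
      (fun e he => hw e (hmem e he).1) (fun e he => (hmem e he).2) (by
        intro v c hc
        have := hcycle v (c.mapLe hHG) (hc.mapLe hHG)
        simpa using this)
    have hcomp : Nat.card G.ConnectedComponent ≤ Nat.card H.ConnectedComponent := by
      apply Nat.card_le_card_of_surjective
        (SimpleGraph.ConnectedComponent.map (SimpleGraph.Hom.ofLE hHG))
      exact SimpleGraph.ConnectedComponent.surjective_map_ofLE hHG
    have hcomp' : (Nat.card G.ConnectedComponent : ℝ) ≤ Nat.card H.ConnectedComponent := by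
      exact_mod_cast hcomp
    have hcard : (G.edgeFinset.card : ℝ) = L.card + S.card := by
      exact_mod_cast (Finset.card_filter_add_card_filter_not (s := G.edgeFinset)
        (fun e => ε / 32 ≤ w e)).symm
    have hsum : ∑ e ∈ L, w e + ∑ e ∈ S, w e = ∑ e ∈ G.edgeFinset, w e :=
      Finset.sum_filter_add_sum_filter_not _ _ _
    have hLs : (L.card : ℝ) * (ε / 32) ≤ ∑ e ∈ L, w e := by
      rw [← nsmul_eq_mul]
      apply Finset.card_nsmul_le_sum
      intro e he
      exact (Finset.mem_filter.1 he).2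
    have hS0 : 0 ≤ ∑ e ∈ S, w e := Finset.sum_nonneg fun e he => hw' e (Finset.mem_filter.1 he).1
    have hL0 : 0 ≤ ∑ e ∈ L, w e := Finset.sum_nonneg fun e he => hw' e (Finset.mem_filter.1 he).1
    rw [hHE, div_pow, le_div_iff₀ (by positivity)] at h
    set y := ∑ e ∈ S, w e
    set z := ∑ e ∈ L, w e
    have hyz : z + y < N := by rw [hsum]; exact htotal
    have h5 : (L.card : ℝ) * ε ^ 2 ≤ 32 * z * N := by
      have : (L.card : ℝ) * ε ≤ 32 * z := by linarith
      calc (L.card : ℝ) * ε ^ 2 = (L.card : ℝ) * ε * ε := by ring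
        _ ≤ 32 * z * ε := by gcongr
        _ ≤ 32 * z * N := by gcongr
    have h6 : ((G.edgeFinset.card : ℝ) - (Fintype.card V : ℝ) +
        (Nat.card G.ConnectedComponent : ℝ)) * ε ^ 2 ≤ ((L.card : ℝ) + ((S.card : ℝ) -
        (Fintype.card V : ℝ) + (Nat.card H.ConnectedComponent : ℝ))) * ε ^ 2 := by
      apply mul_le_mul_of_nonneg_right _ (sq_nonneg ε)
      linarith
    have h7 : y ^ 2 ≤ y * N := by nlinarith
    have h8 : (z + y) * N ≤ N * N := by gcongr
    have h9 : 0 ≤ y * N := by positivity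
    nlinarith
end

section
/- Let k ≥ 1 and let A be a k × k integer matrix with |det A| = N, where N ≥ 1. Then Σ_{i,j} |a_{ij}| ≥ N^{1/k} + k − 1. -/
lemma abs_det_le_prod_row (k : ℕ) (A : Matrix (Fin k) (Fin k) ℤ) :
    |A.det| ≤ ∏ i, ∑ j, |A i j| := by
  rw [← Matrix.det_transpose, Matrix.det_apply, Finset.prod_univ_sum, Fintype.piFinset_univ]
  refine (Finset.abs_sum_le_sum_abs _ _).trans ?_
  have h1 : ∀ σ : Equiv.Perm (Fin k),
      |Equiv.Perm.sign σ • ∏ i, A.transpose (σ i) i| = ∏ i, |A i (σ i)| := by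
    intro σ
    rw [Units.smul_def, smul_eq_mul, abs_mul, Int.isUnit_iff_abs_eq.mp (Units.isUnit _), one_mul,
      Finset.abs_prod]
    rfl
  rw [Finset.sum_congr rfl (fun σ _ => h1 σ)]
  have h2 : ∑ σ : Equiv.Perm (Fin k), ∏ i, |A i (σ i)|
      = ∑ f ∈ Finset.univ.image (fun σ : Equiv.Perm (Fin k) => (σ : Fin k → Fin k)),
        ∏ i, |A i (f i)| := by
    rw [Finset.sum_image]
    intro a _ b _ h
    exact DFunLike.coe_injective h
  rw [h2]
  exact Finset.sum_le_sum_of_subset_of_nonneg (Finset.subset_univ _)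
    (fun f _ _ => Finset.prod_nonneg fun i _ => abs_nonneg _)

/-- A `k × k` integer matrix with `|det A| = N ≥ 1` has total entry sum
`Σ|a_{ij}| ≥ N^{1/k} + k − 1`. -/
theorem entry_sum_ge_of_det
    (k : ℕ) (hk : 1 ≤ k) (N : ℕ) (hN : 1 ≤ N)
    (A : Matrix (Fin k) (Fin k) ℤ) (hdet : A.det.natAbs = N) :
    (N : ℝ) ^ ((1 : ℝ) / k) + k - 1 ≤ ∑ i, ∑ j, (|A i j| : ℝ) := by
  have hb := abs_det_le_prod_row k A
  have hN' : |A.det| = (N : ℤ) := by rw [Int.abs_eq_natAbs, hdet]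
  rw [hN'] at hb
  obtain ⟨r, hr⟩ : ∃ r : Fin k → ℤ, r = fun i => ∑ j, |A i j| := ⟨_, rfl⟩
  have hrr : ∀ i, ∑ j, (|A i j| : ℝ) = (r i : ℝ) := by
    intro i; rw [hr]; push_cast; rfl
  simp only [hrr]
  have hb' : (N : ℤ) ≤ ∏ i, r i := by rw [hr]; exact hb
  have hr1 : ∀ i, 1 ≤ r i := by
    intro i
    have h0 : 0 ≤ r i := by rw [hr]; exact Finset.sum_nonneg fun j _ => abs_nonneg _
    rcases h0.lt_or_eq with h | h
    · exact h
    · rw [Finset.prod_eq_zero (Finset.mem_univ i) h.symm] at hb'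
      omega
  have hbR : (N : ℝ) ≤ ∏ i, (r i : ℝ) := by exact_mod_cast hb'
  have hr1R : ∀ i, (1 : ℝ) ≤ r i := fun i => by exact_mod_cast hr1 i
  set c := (N : ℝ) ^ ((1 : ℝ) / k) with hc
  have hck : c ^ k = N := by
    rw [hc, one_div]
    exact Real.rpow_inv_natCast_pow (Nat.cast_nonneg _) (by omega)
  obtain ⟨i, hi⟩ : ∃ i, c ≤ r i := by
    by_contra! h
    have : ∏ i, (r i : ℝ) < ∏ _i : Fin k, c :=
      Finset.prod_lt_prod_of_nonempty (fun i _ => by linarith [hr1R i]) (fun i _ => h i)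
        ⟨⟨0, hk⟩, Finset.mem_univ _⟩
    rw [Finset.prod_const, Finset.card_univ, Fintype.card_fin, hck] at this
    linarith
  rw [← Finset.add_sum_erase _ _ (Finset.mem_univ i)]
  have h3 : ((k : ℝ) - 1) ≤ ∑ x ∈ Finset.univ.erase i, (r x : ℝ) := by
    have := Finset.card_nsmul_le_sum (Finset.univ.erase i) (fun x => (r x : ℝ)) 1
      (fun x _ => hr1R x)
    rw [Finset.card_erase_of_mem (Finset.mem_univ i), Finset.card_univ, Fintype.card_fin,
      nsmul_eq_mul, Nat.cast_sub hk] at this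
    simpa using this
  linarith
end

section
/- Let Λ be a lattice in ℝ² with minimal length ε, and let α, β ∈ Λ be linearly independent over ℝ with ‖α‖ + ‖β‖ ≤ R. Then the subgroup ℤα + ℤβ has finite index in Λ, and this index is at most 8R²/(3ε²). -/
open MeasureTheory Module in
theorem aux_covol_le (α β : EuclideanSpace ℝ (Fin 2)) (b : Basis (Fin 2) ℝ (EuclideanSpace ℝ (Fin 2)))
    (hb : ⇑b = ![α, β]) :
    ZLattice.covolume (Submodule.span ℤ (Set.range b)) ≤ ‖α‖ * ‖β‖ := by
  have h0 : (volume : Measure (EuclideanSpace ℝ (Fin 2))).real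
      (ZSpan.fundamentalDomain (EuclideanSpace.basisFun (Fin 2) ℝ).toBasis) = 1 := by
    rw [measureReal_congr (ZSpan.fundamentalDomain_ae_parallelepiped _ _), measureReal_def]
    simp [OrthonormalBasis.volume_parallelepiped]
  rw [ZLattice.covolume_eq_measure_fundamentalDomain _ _ (ZSpan.isAddFundamentalDomain b volume),
    ZSpan.measureReal_fundamentalDomain b volume (EuclideanSpace.basisFun (Fin 2) ℝ).toBasis]
  rw [h0, mul_one, hb, Basis.det_apply, Matrix.det_fin_two]
  simp only [Basis.toMatrix_apply, EuclideanSpace.norm_eq, Fin.sum_univ_two, Real.norm_eq_abs, sq_abs]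
  rw [← Real.sqrt_mul (by positivity)]
  apply Real.abs_le_sqrt
  simp
  nlinarith [sq_nonneg (α 0 * β 0 + α 1 * β 1)]

open MeasureTheory Module in
theorem aux_le_covol
    (Λ : Submodule ℤ (EuclideanSpace ℝ (Fin 2))) [DiscreteTopology Λ] [IsZLattice ℝ Λ]
    (ε : ℝ) (h0 : 0 < ε) (hε : ∀ v ∈ Λ, v ≠ 0 → ε ≤ ‖v‖) :
    Real.pi * ε ^ 2 ≤ 4 * ZLattice.covolume Λ := by
  by_contra! hlt
  have fund := ZLattice.isAddFundamentalDomain (Free.chooseBasis ℤ Λ) volume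
  have hc := ZLattice.covolume_eq_measure_fundamentalDomain Λ volume fund
  set F := ZSpan.fundamentalDomain ((Free.chooseBasis ℤ Λ).ofZLatticeBasis ℝ Λ) with hF
  have hfin : volume F ≠ ⊤ := (ZSpan.fundamentalDomain_isBounded _).measure_lt_top.ne
  have : Countable Λ.toAddSubgroup := inferInstanceAs (Countable Λ)
  obtain ⟨x, hx, hxs⟩ := exists_ne_zero_mem_lattice_of_measure_mul_two_pow_lt_measure
    (L := Λ.toAddSubgroup) (s := Metric.ball 0 ε) (μ := volume) (F := F) fund
    (by simp) (convex_ball _ _) (by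
      rw [InnerProductSpace.volume_ball_of_dim_even (k := 1) (by simp)]
      rw [← ENNReal.ofReal_toReal hfin]
      have : (volume F).toReal = ZLattice.covolume Λ := hc.symm
      rw [this]
      have e4 : (2 : ENNReal) ^ 2 = ENNReal.ofReal (2 ^ 2) := by
        rw [ENNReal.ofReal_pow (by norm_num)]; simp
      simp only [finrank_euclideanSpace, Fintype.card_fin]
      rw [e4]
      rw [← ENNReal.ofReal_pow h0.le,
        ← ENNReal.ofReal_mul (ZLattice.covolume_pos Λ volume).le, ← ENNReal.ofReal_mul (by positivity)]
      rw [ENNReal.ofReal_lt_ofReal_iff (by simp; positivity)]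
      simp
      linarith)
  have := hε x x.2 (by simpa using hx)
  simp at hxs
  linarith

open MeasureTheory Module in
/-- If `Λ` is a lattice in `ℝ²` with minimal length `ε` and `α, β ∈ Λ`
are linearly independent over `ℝ` with `‖α‖ + ‖β‖ ≤ R`, then `ℤα + ℤβ` has finite index
in `Λ`, at most `8R²/(3ε²)`. -/
theorem sublattice_index_bound
    (Λ : Submodule ℤ (EuclideanSpace ℝ (Fin 2))) [DiscreteTopology Λ] [IsZLattice ℝ Λ]
    (ε R : ℝ) (hε : IsLeast {r : ℝ | ∃ v ∈ Λ, v ≠ 0 ∧ ‖v‖ = r} ε)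
    (α β : EuclideanSpace ℝ (Fin 2)) (hα : α ∈ Λ) (hβ : β ∈ Λ)
    (hind : LinearIndependent ℝ ![α, β]) (hlen : ‖α‖ + ‖β‖ ≤ R) :
    Nat.card (Λ ⧸ (Submodule.span ℤ {(⟨α, hα⟩ : Λ), (⟨β, hβ⟩ : Λ)})) ≠ 0 ∧
    (Nat.card (Λ ⧸ (Submodule.span ℤ {(⟨α, hα⟩ : Λ), (⟨β, hβ⟩ : Λ)})) : ℝ) ≤
      8 * R ^ 2 / (3 * ε ^ 2) := by
  obtain ⟨⟨v, hv, hv0, hvε⟩, hmin⟩ := hε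
  have h0 : 0 < ε := hvε ▸ norm_pos_iff.2 hv0
  have h1 := aux_le_covol Λ ε h0 (fun w hw hw0 => hmin ⟨w, hw, hw0, rfl⟩)
  let b := basisOfLinearIndependentOfCardEqFinrank hind (by simp)
  have hb : ⇑b = ![α, β] := coe_basisOfLinearIndependentOfCardEqFinrank _ _
  have h2 := aux_covol_le α β b hb
  have hr : Set.range b = {α, β} := by rw [hb]; simp [Set.pair_comm]
  have hle : Submodule.span ℤ (Set.range b) ≤ Λ := by
    rw [hr, Submodule.span_le]
    rintro x (rfl | rfl) <;> assumption
  have h3 := ZLattice.covolume_div_covolume_eq_relIndex' _ Λ hle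
  have hcard : Nat.card (Λ ⧸ (Submodule.span ℤ {(⟨α, hα⟩ : Λ), (⟨β, hβ⟩ : Λ)})) =
      (Submodule.span ℤ (Set.range b)).toAddSubgroup.relIndex Λ.toAddSubgroup := by
    have : (Submodule.span ℤ {(⟨α, hα⟩ : Λ), (⟨β, hβ⟩ : Λ)}) =
        (Submodule.span ℤ (Set.range b)).comap Λ.subtype := by
      apply Submodule.map_injective_of_injective Λ.subtype_injective
      rw [Submodule.map_span, Submodule.map_comap_subtype, inf_eq_right.2 hle, hr]
      simp [Set.image_pair]
    rw [this]
    rfl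
  rw [← hcard] at h3
  have p1 := ZLattice.covolume_pos (Submodule.span ℤ (Set.range b)) volume
  have p2 := ZLattice.covolume_pos Λ volume
  refine ⟨fun h => ?_, ?_⟩
  · rw [h] at h3
    have := div_pos p1 p2
    simp only [Nat.cast_zero] at h3
    linarith
  · rw [← h3, div_le_div_iff₀ p2 (by positivity)]
    have hR : 4 * (‖α‖ * ‖β‖) ≤ R ^ 2 := by
      nlinarith [norm_nonneg α, norm_nonneg β, sq_nonneg (‖α‖ - ‖β‖)]
    have hc : 3 * ε ^ 2 ≤ 4 * ZLattice.covolume Λ := by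
      nlinarith [Real.pi_gt_three, sq_nonneg ε]
    calc _ ≤ (R ^ 2) * (4 * ZLattice.covolume Λ) := by
          apply mul_le_mul _ hc (by positivity) (by positivity)
          linarith [mul_nonneg (norm_nonneg α) (norm_nonneg β)]
      _ ≤ _ := by nlinarith [mul_nonneg (sq_nonneg R) p2.le]
end
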